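/- arXiv:1707.01528 — 3 statements merged into one kernel-verified Lean document; each statement's English description precedes it below -/
import Mathlib

section
/- Theta representation and Landen-type identity for S'' (formula (n3)): Let τ lie in the complex upper half-plane and let u ∈ ℂ be such that θ₁(u,τ)·θ₄(u,τ) ≠ 0 and θ₁(u, τ/2) ≠ 0. Then S''(u,τ) = −π² θ₂(0,τ)² θ₃(0,τ)² θ₄(0,τ)³ · θ₄(2u,τ) / (θ₁(u,τ)² θ₄(u,τ)²) = −π² θ₃(0, τ/2)·θ₄(0, τ/2)·θ₂(0, τ/2)² · θ₃(u, τ/2)·θ₄(u, τ/2)/θ₁(u, τ/2)². -/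
open Complex

/-- Jacobi theta function θ₁(u,τ). -/
noncomputable def theta1 (u τ : ℂ) : ℂ :=
  -∑' k : ℤ, Complex.exp ((Real.pi : ℂ) * Complex.I * τ * ((k : ℂ) + 1/2)^2
      + 2 * (Real.pi : ℂ) * Complex.I * (u + 1/2) * ((k : ℂ) + 1/2))

/-- Jacobi theta function θ₂(u,τ). -/
noncomputable def theta2 (u τ : ℂ) : ℂ :=
  ∑' k : ℤ, Complex.exp ((Real.pi : ℂ) * Complex.I * τ * ((k : ℂ) + 1/2)^2
      + 2 * (Real.pi : ℂ) * Complex.I * u * ((k : ℂ) + 1/2))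

/-- Jacobi theta function θ₃(u,τ). -/
noncomputable def theta3 (u τ : ℂ) : ℂ :=
  ∑' k : ℤ, Complex.exp ((Real.pi : ℂ) * Complex.I * τ * (k : ℂ)^2
      + 2 * (Real.pi : ℂ) * Complex.I * u * (k : ℂ))

/-- Jacobi theta function θ₄(u,τ). -/
noncomputable def theta4 (u τ : ℂ) : ℂ :=
  ∑' k : ℤ, Complex.exp ((Real.pi : ℂ) * Complex.I * τ * (k : ℂ)^2
      + 2 * (Real.pi : ℂ) * Complex.I * (u + 1/2) * (k : ℂ))

/-- ζ_a(u,τ) = θ_a'(u,τ)/θ_a(u,τ). -/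
noncomputable def zeta1 (u τ : ℂ) : ℂ := deriv (fun v => theta1 v τ) u / theta1 u τ
noncomputable def zeta2 (u τ : ℂ) : ℂ := deriv (fun v => theta2 v τ) u / theta2 u τ
noncomputable def zeta3 (u τ : ℂ) : ℂ := deriv (fun v => theta3 v τ) u / theta3 u τ
noncomputable def zeta4 (u τ : ℂ) : ℂ := deriv (fun v => theta4 v τ) u / theta4 u τ

/-- ℘_a(u,τ) = −∂_u ζ_a(u,τ). -/
noncomputable def wp1 (u τ : ℂ) : ℂ := -deriv (fun v => zeta1 v τ) u
noncomputable def wp2 (u τ : ℂ) : ℂ := -deriv (fun v => zeta2 v τ) u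
noncomputable def wp1' (u τ : ℂ) : ℂ := deriv (fun v => wp1 v τ) u
noncomputable def wp2' (u τ : ℂ) : ℂ := deriv (fun v => wp2 v τ) u

/-- S'(u,τ) = ζ₁(u,τ) − ζ₄(u,τ). -/
noncomputable def Sp (u τ : ℂ) : ℂ := zeta1 u τ - zeta4 u τ
/-- S''(u,τ) = ∂_u S'(u,τ). -/
noncomputable def Spp (u τ : ℂ) : ℂ := deriv (fun v => Sp v τ) u
/-- S'''(u,τ) = ∂_u S''(u,τ). -/
noncomputable def Sppp (u τ : ℂ) : ℂ := deriv (fun v => Spp v τ) u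

/-- Partial derivative in the j-th coordinate of a ℂ-valued function on ℝ^N. -/
noncomputable def pdC {N : ℕ} (j : Fin N) (f : (Fin N → ℝ) → ℂ) (x : Fin N → ℝ) : ℂ :=
  fderiv ℝ f x (Pi.single j 1)

/-- Partial derivative in the j-th coordinate of an ℝ-valued function on ℝ^d. -/
noncomputable def pd {d : ℕ} (j : Fin d) (f : (Fin d → ℝ) → ℝ) (x : Fin d → ℝ) : ℝ :=
  fderiv ℝ f x (Pi.single j 1)

set_option linter.unusedSimpArgs false

open Filter Topology

noncomputable def thF (a u τ : ℂ) : ℂ :=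
  ∑' k : ℤ, Complex.exp ((Real.pi : ℂ) * Complex.I * τ * ((k : ℂ) + a)^2
      + 2 * (Real.pi : ℂ) * Complex.I * u * ((k : ℂ) + a))

lemma thF_term (a u τ : ℂ) (k : ℤ) :
    Complex.exp ((Real.pi : ℂ) * Complex.I * τ * ((k : ℂ) + a)^2
      + 2 * (Real.pi : ℂ) * Complex.I * u * ((k : ℂ) + a)) =
    Complex.exp ((Real.pi : ℂ) * Complex.I * τ * a^2 + 2 * (Real.pi : ℂ) * Complex.I * u * a) *
      jacobiTheta₂_term k (u + a * τ) τ := by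
  rw [jacobiTheta₂_term, ← Complex.exp_add]
  congr 1; ring

lemma thF_eq (a u τ : ℂ) : thF a u τ =
    Complex.exp ((Real.pi : ℂ) * Complex.I * τ * a^2 + 2 * (Real.pi : ℂ) * Complex.I * u * a) *
      jacobiTheta₂ (u + a * τ) τ := by
  rw [thF, jacobiTheta₂, ← tsum_mul_left]
  exact tsum_congr (thF_term a u τ)

lemma thF_summable (a u : ℂ) {τ : ℂ} (hτ : 0 < τ.im) :
    Summable (fun k : ℤ => Complex.exp ((Real.pi : ℂ) * Complex.I * τ * ((k : ℂ) + a)^2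
      + 2 * (Real.pi : ℂ) * Complex.I * u * ((k : ℂ) + a))) := by
  simp_rw [thF_term]
  exact ((summable_jacobiTheta₂_term_iff _ τ).mpr hτ).mul_left _

lemma thF_add_one_char (a u τ : ℂ) : thF (a + 1) u τ = thF a u τ := by
  unfold thF
  rw [← (Equiv.addRight (1:ℤ)).tsum_eq (fun k : ℤ =>
    Complex.exp ((Real.pi : ℂ) * Complex.I * τ * ((k : ℂ) + a)^2
      + 2 * (Real.pi : ℂ) * Complex.I * u * ((k : ℂ) + a)))]
  refine tsum_congr fun k => ?_
  simp only [Equiv.coe_addRight]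
  push_cast
  congr 1; ring

lemma thF_add_one (a u τ : ℂ) :
    thF a (u + 1) τ = Complex.exp (2 * (Real.pi : ℂ) * Complex.I * a) * thF a u τ := by
  rw [thF_eq, thF_eq, show u + 1 + a * τ = u + a * τ + 1 by ring, jacobiTheta₂_add_left,
    ← mul_assoc, ← Complex.exp_add]
  congr 2; ring

/-- (j,k), ε ↦ (j+k+ε, j-k). -/
def parEquiv : (ℤ × ℤ) ⊕ (ℤ × ℤ) ≃ ℤ × ℤ where
  toFun := Sum.elim (fun p => (p.1 + p.2, p.1 - p.2)) (fun p => (p.1 + p.2 + 1, p.1 - p.2))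
  invFun := fun p => if (p.1 + p.2) % 2 = 0 then Sum.inl ((p.1 + p.2) / 2, (p.1 - p.2) / 2)
    else Sum.inr ((p.1 + p.2 - 1) / 2, (p.1 - p.2 - 1) / 2)
  left_inv := by
    rintro (⟨j, k⟩ | ⟨j, k⟩)
    · have h : (j + k + (j - k)) % 2 = 0 := by omega
      simp only [Sum.elim_inl, h, if_true]
      congr 2 <;> omega
    · have h : ¬ (j + k + 1 + (j - k)) % 2 = 0 := by omega
      simp only [Sum.elim_inr, h, if_false]
      congr 2 <;> omega
  right_inv := by
    rintro ⟨m, n⟩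
    by_cases h : (m + n) % 2 = 0
    · simp only [h, if_true, Sum.elim_inl]
      congr 1 <;> omega
    · simp only [h, if_false, Sum.elim_inr]
      congr 1 <;> omega

lemma thF_mul (a b x y : ℂ) {τ : ℂ} (hτ : 0 < τ.im) :
    thF a x τ * thF b y τ =
      thF ((a + b) / 2) (x + y) (2 * τ) * thF ((a - b) / 2) (x - y) (2 * τ)
      + thF ((a + b + 1) / 2) (x + y) (2 * τ) * thF ((a - b + 1) / 2) (x - y) (2 * τ) := by
  have hτ2 : 0 < (2 * τ).im := by simpa using hτ
  unfold thF
  rw [tsum_mul_tsum_of_summable_norm (thF_summable a x hτ).norm (thF_summable b y hτ).norm,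
    tsum_mul_tsum_of_summable_norm (thF_summable _ _ hτ2).norm (thF_summable _ _ hτ2).norm,
    tsum_mul_tsum_of_summable_norm (thF_summable _ _ hτ2).norm (thF_summable _ _ hτ2).norm]
  rw [← parEquiv.tsum_eq]
  rw [Summable.tsum_sum]
  · congr 1 <;> refine tsum_congr ?_
    all_goals
      rintro ⟨j, k⟩
      simp only [parEquiv, Equiv.coe_fn_mk, Sum.elim_inl, Sum.elim_inr, ← Complex.exp_add]
      push_cast
      congr 1; ring
  all_goals
    have hs := parEquiv.summable_iff.mpr
      (summable_mul_of_summable_norm (thF_summable a x hτ).norm (thF_summable b y hτ).norm)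
  · exact hs.comp_injective Sum.inl_injective
  · exact hs.comp_injective Sum.inr_injective

lemma theta1_eq (u τ : ℂ) : theta1 u τ = -thF (1/2) (u + 1/2) τ := rfl
lemma theta2_eq (u τ : ℂ) : theta2 u τ = thF (1/2) u τ := rfl
lemma theta3_eq (u τ : ℂ) : theta3 u τ = thF 0 u τ := by simp [theta3, thF]
lemma theta4_eq (u τ : ℂ) : theta4 u τ = thF 0 (u + 1/2) τ := by simp [theta4, thF]

lemma thF_half_add_one (u τ : ℂ) : thF (1/2) (u + 1) τ = - thF (1/2) u τ := by
  rw [thF_add_one, show 2 * (Real.pi : ℂ) * Complex.I * (1/2) = Real.pi * Complex.I by ring,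
    Complex.exp_pi_mul_I]; ring
lemma thF_zero_add_one (u τ : ℂ) : thF 0 (u + 1) τ = thF 0 u τ := by
  rw [thF_add_one]; simp
lemma thF_one (u τ : ℂ) : thF 1 u τ = thF 0 u τ := by
  rw [← thF_add_one_char 0]; simp

lemma P44 (x y : ℂ) {τ : ℂ} (hτ : 0 < τ.im) : theta4 x τ * theta4 y τ =
    theta3 (x+y) (2*τ) * theta3 (x-y) (2*τ) - theta2 (x+y) (2*τ) * theta2 (x-y) (2*τ) := by
  simp only [theta1_eq, theta2_eq, theta3_eq, theta4_eq]
  rw [thF_mul _ _ _ _ hτ, show x + 1/2 + (y + 1/2) = x + y + 1 by ring,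
    show x + 1/2 - (y + 1/2) = x - y by ring]
  norm_num only
  simp only [thF_half_add_one, thF_zero_add_one, thF_one]
  ring

lemma P11 (x y : ℂ) {τ : ℂ} (hτ : 0 < τ.im) : theta1 x τ * theta1 y τ =
    theta3 (x+y) (2*τ) * theta2 (x-y) (2*τ) - theta2 (x+y) (2*τ) * theta3 (x-y) (2*τ) := by
  simp only [theta1_eq, theta2_eq, theta3_eq, theta4_eq, neg_mul_neg]
  rw [thF_mul _ _ _ _ hτ, show x + 1/2 + (y + 1/2) = x + y + 1 by ring,
    show x + 1/2 - (y + 1/2) = x - y by ring]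
  norm_num only
  simp only [thF_half_add_one, thF_zero_add_one, thF_one]
  ring

lemma P22 (x y : ℂ) {τ : ℂ} (hτ : 0 < τ.im) : theta2 x τ * theta2 y τ =
    theta3 (x+y) (2*τ) * theta2 (x-y) (2*τ) + theta2 (x+y) (2*τ) * theta3 (x-y) (2*τ) := by
  simp only [theta1_eq, theta2_eq, theta3_eq, theta4_eq, neg_mul_neg]
  rw [thF_mul _ _ _ _ hτ]
  norm_num only
  simp only [thF_half_add_one, thF_zero_add_one, thF_one]
  ring

lemma P12 (x y : ℂ) {τ : ℂ} (hτ : 0 < τ.im) : theta1 x τ * theta2 y τ =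
    theta1 (x+y) (2*τ) * theta4 (x-y) (2*τ) + theta4 (x+y) (2*τ) * theta1 (x-y) (2*τ) := by
  simp only [theta1_eq, theta2_eq, theta3_eq, theta4_eq, neg_mul]
  rw [thF_mul _ _ _ _ hτ, show x + 1/2 + y = x + y + 1/2 by ring,
    show x + 1/2 - y = x - y + 1/2 by ring]
  norm_num only
  simp only [thF_half_add_one, thF_zero_add_one, thF_one]
  ring

lemma P34 (x y : ℂ) {τ : ℂ} (hτ : 0 < τ.im) : theta3 x τ * theta4 y τ =
    theta4 (x+y) (2*τ) * theta4 (x-y) (2*τ) - theta1 (x+y) (2*τ) * theta1 (x-y) (2*τ) := by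
  simp only [theta1_eq, theta2_eq, theta3_eq, theta4_eq]
  rw [thF_mul _ _ _ _ hτ, show x + (y + 1/2) = x + y + 1/2 by ring,
    show x - (y + 1/2) = x - y - 1/2 by ring]
  have e1 : thF 0 (x - y + 1/2) (2*τ) = thF 0 (x - y - 1/2) (2*τ) := by
    rw [← thF_zero_add_one (x - y - 1/2)]; congr 1; ring
  have e2 : thF (1/2) (x - y + 1/2) (2*τ) = -thF (1/2) (x - y - 1/2) (2*τ) := by
    rw [← thF_half_add_one (x - y - 1/2)]; congr 1; ring
  rw [e1, e2, show ((0:ℂ) + 0) / 2 = 0 by norm_num, show ((0:ℂ) - 0) / 2 = 0 by norm_num,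
    show ((0:ℂ) + 0 + 1) / 2 = 1/2 by norm_num, show ((0:ℂ) - 0 + 1) / 2 = 1/2 by norm_num]
  ring

lemma theta1_zero {τ : ℂ} (hτ : 0 < τ.im) : theta1 0 τ = 0 := by
  have h := P11 0 0 hτ
  simp only [add_zero, sub_zero] at h
  have : theta1 0 τ * theta1 0 τ = 0 := by rw [h]; ring
  simpa using this

lemma Q44 (x y : ℂ) {τ : ℂ} (hτ : 0 < τ.im) :
    theta4 (x + y) τ * theta4 (x - y) τ * theta4 0 τ ^ 2 =
      theta4 x τ ^ 2 * theta4 y τ ^ 2 - theta1 x τ ^ 2 * theta1 y τ ^ 2 := by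
  simp only [pow_two, P44 _ _ hτ, P11 _ _ hτ]
  rw [show x + y + (x - y) = x + x by ring, show x + y - (x - y) = y + y by ring]
  simp only [sub_self, add_zero]
  ring

lemma Q11 (x y : ℂ) {τ : ℂ} (hτ : 0 < τ.im) :
    theta1 (x + y) τ * theta1 (x - y) τ * theta4 0 τ ^ 2 =
      theta1 x τ ^ 2 * theta4 y τ ^ 2 - theta4 x τ ^ 2 * theta1 y τ ^ 2 := by
  simp only [pow_two, P44 _ _ hτ, P11 _ _ hτ]
  rw [show x + y + (x - y) = x + x by ring, show x + y - (x - y) = y + y by ring]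
  simp only [sub_self, add_zero]
  ring

lemma lim_series (c : ℤ → ℂ) (e : ℤ → ℕ) {τ : ℂ} (hτ : 0 < τ.im)
    (hs : Summable fun n : ℤ => c n * Complex.exp ((Real.pi : ℂ) * Complex.I * τ * (e n : ℂ))) :
    Tendsto (fun m : ℕ => ∑' n : ℤ,
        c n * Complex.exp ((Real.pi : ℂ) * Complex.I * (2 ^ m * τ) * (e n : ℂ))) atTop
      (𝓝 (∑' n : ℤ, if e n = 0 then c n else 0)) := by
  have hpow (m : ℕ) (n : ℤ) : Complex.exp ((Real.pi : ℂ) * Complex.I * (2 ^ m * τ) * (e n : ℂ)) =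
      Complex.exp ((Real.pi : ℂ) * Complex.I * τ * (e n : ℂ)) ^ (2 ^ m) := by
    rw [← Complex.exp_nat_mul]; congr 1; push_cast; ring
  have hre (n : ℤ) : ((Real.pi : ℂ) * Complex.I * τ * (e n : ℂ)).re = -(Real.pi * τ.im * e n) := by
    rw [show (Real.pi : ℂ) * Complex.I * τ * (e n : ℂ) = ((Real.pi * e n : ℝ) : ℂ) * (Complex.I * τ)
      by push_cast; ring, Complex.re_ofReal_mul, Complex.I_mul_re]
    ring
  have hle (n : ℤ) : ‖Complex.exp ((Real.pi : ℂ) * Complex.I * τ * (e n : ℂ))‖ ≤ 1 := by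
    rw [Complex.norm_exp, hre, Real.exp_le_one_iff, neg_nonpos]
    have := Real.pi_pos
    positivity
  refine tendsto_tsum_of_dominated_convergence hs.norm ?_ ?_
  · intro n
    simp_rw [hpow]
    by_cases h : e n = 0
    · simp [h]
    · simp only [h, if_false]
      rw [← mul_zero (c n)]
      refine Tendsto.const_mul _ ?_
      refine (tendsto_pow_atTop_nhds_zero_of_norm_lt_one ?_).comp
        (tendsto_pow_atTop_atTop_of_one_lt one_lt_two)
      rw [Complex.norm_exp, hre, Real.exp_lt_one_iff, neg_lt_zero]
      have := Real.pi_pos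
      have : 0 < e n := Nat.pos_of_ne_zero h
      positivity
  · refine Eventually.of_forall fun m n => ?_
    rw [hpow, norm_mul, norm_mul, norm_pow]
    refine mul_le_mul_of_nonneg_left ?_ (norm_nonneg _)
    exact pow_le_of_le_one (norm_nonneg _) (hle n) (by positivity)

/-- the exponent n^2 -/
def e0 (n : ℤ) : ℕ := (n ^ 2).toNat
/-- the exponent n^2+n -/
def e1 (n : ℤ) : ℕ := (n ^ 2 + n).toNat

lemma e0_cast (n : ℤ) : ((e0 n : ℕ) : ℂ) = (n : ℂ) ^ 2 := by
  have : ((e0 n : ℕ) : ℤ) = n ^ 2 := Int.toNat_of_nonneg (sq_nonneg n)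
  exact_mod_cast congrArg (Int.cast : ℤ → ℂ) this

lemma e1_nonneg (n : ℤ) : 0 ≤ n ^ 2 + n := by
  rcases le_or_gt 0 n with h | h
  · positivity
  · nlinarith

lemma e1_cast (n : ℤ) : ((e1 n : ℕ) : ℂ) = (n : ℂ) ^ 2 + n := by
  have : ((e1 n : ℕ) : ℤ) = n ^ 2 + n := Int.toNat_of_nonneg (e1_nonneg n)
  exact_mod_cast congrArg (Int.cast : ℤ → ℂ) this

lemma e0_eq (n : ℤ) : e0 n = 0 ↔ n = 0 := by
  have : ((e0 n : ℕ) : ℤ) = n ^ 2 := Int.toNat_of_nonneg (sq_nonneg n)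
  constructor
  · intro h; rw [h] at this; simpa using this.symm
  · rintro rfl; rfl

lemma e1_eq (n : ℤ) : e1 n = 0 ↔ n = 0 ∨ n = -1 := by
  have : ((e1 n : ℕ) : ℤ) = n ^ 2 + n := Int.toNat_of_nonneg (e1_nonneg n)
  constructor
  · intro h; rw [h] at this
    have h2 : n * (n + 1) = 0 := by push_cast at this; linarith
    rcases mul_eq_zero.mp h2 with h | h
    · exact Or.inl h
    · exact Or.inr (by omega)
  · rintro (rfl | rfl) <;> rfl

lemma sum_e0 (c : ℤ → ℂ) : (∑' n : ℤ, if e0 n = 0 then c n else 0) = c 0 := by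
  simp_rw [e0_eq]
  simp

lemma sum_e1 (c : ℤ → ℂ) : (∑' n : ℤ, if e1 n = 0 then c n else 0) = c 0 + c (-1) := by
  rw [tsum_eq_sum (s := {0, -1})]
  · simp [e1_eq]
  · intro n hn
    simp only [Finset.mem_insert, Finset.mem_singleton] at hn
    simp [e1_eq, hn]

lemma im_pow {τ : ℂ} (hτ : 0 < τ.im) (m : ℕ) : 0 < (2 ^ m * τ).im := by
  rw [show (2 : ℂ) ^ m * τ = ((2 ^ m : ℝ) : ℂ) * τ by push_cast; ring, Complex.im_ofReal_mul]
  positivity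

lemma lim_theta3 {τ : ℂ} (hτ : 0 < τ.im) :
    Tendsto (fun m : ℕ => theta3 0 (2 ^ m * τ)) atTop (𝓝 1) := by
  have key (σ : ℂ) (n : ℤ) : (1 : ℂ) * Complex.exp ((Real.pi : ℂ) * Complex.I * σ * (e0 n : ℂ)) =
      Complex.exp ((Real.pi : ℂ) * Complex.I * σ * ((n : ℂ) + 0)^2
      + 2 * (Real.pi : ℂ) * Complex.I * 0 * ((n : ℂ) + 0)) := by
    rw [e0_cast, one_mul]; congr 1; ring
  have h := lim_series (fun _ => 1) e0 hτ (by
    simp_rw [key]; exact thF_summable 0 0 hτ)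
  rw [sum_e0] at h
  refine h.congr fun m => ?_
  rw [theta3_eq, thF]
  exact tsum_congr (key _)

lemma lim_theta4 {τ : ℂ} (hτ : 0 < τ.im) :
    Tendsto (fun m : ℕ => theta4 0 (2 ^ m * τ)) atTop (𝓝 1) := by
  have key (σ : ℂ) (n : ℤ) : Complex.exp (Real.pi * Complex.I * n) *
      Complex.exp ((Real.pi : ℂ) * Complex.I * σ * (e0 n : ℂ)) =
      Complex.exp ((Real.pi : ℂ) * Complex.I * σ * ((n : ℂ) + 0)^2
      + 2 * (Real.pi : ℂ) * Complex.I * (0 + 1/2) * ((n : ℂ) + 0)) := by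
    rw [e0_cast, ← Complex.exp_add]; congr 1; ring
  have h := lim_series (fun n => Complex.exp (Real.pi * Complex.I * n)) e0 hτ (by
    simp_rw [key]; exact thF_summable 0 _ hτ)
  rw [sum_e0] at h
  simp only [Int.cast_zero, mul_zero, Complex.exp_zero] at h
  refine h.congr fun m => ?_
  rw [theta4_eq, thF]
  exact tsum_congr (key _)

lemma lim_theta2 {τ : ℂ} (hτ : 0 < τ.im) :
    Tendsto (fun m : ℕ => Complex.exp (-(Real.pi * Complex.I * (2 ^ m * τ) / 4)) *
      theta2 0 (2 ^ m * τ)) atTop (𝓝 2) := by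
  have key (σ : ℂ) (n : ℤ) : (1 : ℂ) * Complex.exp ((Real.pi : ℂ) * Complex.I * σ * (e1 n : ℂ)) =
      Complex.exp (-(Real.pi * Complex.I * σ / 4)) *
      Complex.exp ((Real.pi : ℂ) * Complex.I * σ * ((n : ℂ) + 1/2)^2
      + 2 * (Real.pi : ℂ) * Complex.I * 0 * ((n : ℂ) + 1/2)) := by
    rw [e1_cast, one_mul, ← Complex.exp_add]; congr 1; ring
  have h := lim_series (fun _ => 1) e1 hτ (by
    simp_rw [key]; exact (thF_summable (1/2) 0 hτ).mul_left _)
  rw [sum_e1, one_add_one_eq_two] at h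
  refine h.congr fun m => ?_
  rw [theta2_eq, thF, ← tsum_mul_left]
  exact tsum_congr (key _)

lemma thF_hasDerivAt (a u : ℂ) {τ : ℂ} (hτ : 0 < τ.im) : HasDerivAt (fun v => thF a v τ)
    (Complex.exp ((Real.pi : ℂ) * Complex.I * τ * a^2 + 2 * (Real.pi : ℂ) * Complex.I * u * a) *
      (2 * (Real.pi : ℂ) * Complex.I * a * jacobiTheta₂ (u + a * τ) τ
        + jacobiTheta₂' (u + a * τ) τ)) u := by
  simp_rw [thF_eq]
  have hJ : HasDerivAt (fun v => jacobiTheta₂ (v + a * τ) τ) (jacobiTheta₂' (u + a * τ) τ) u :=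
    (hasDerivAt_jacobiTheta₂_fst (u + a * τ) hτ).comp_add_const u (a * τ)
  have hE : HasDerivAt (fun v : ℂ => (Real.pi : ℂ) * Complex.I * τ * a^2
      + 2 * (Real.pi : ℂ) * Complex.I * v * a) (2 * (Real.pi : ℂ) * Complex.I * 1 * a) u :=
    ((((hasDerivAt_id u).const_mul (2 * (Real.pi : ℂ) * Complex.I)).mul_const a).const_add _)
  refine (hE.cexp.mul hJ).congr_deriv ?_
  ring

lemma thF_diff (a : ℂ) {τ : ℂ} (hτ : 0 < τ.im) : Differentiable ℂ (fun v => thF a v τ) :=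
  fun u => (thF_hasDerivAt a u hτ).differentiableAt

lemma theta1_diff {τ : ℂ} (hτ : 0 < τ.im) : Differentiable ℂ (fun v => theta1 v τ) := by
  simp_rw [theta1_eq]
  exact ((thF_diff (1/2) hτ).comp (differentiable_id.add_const _)).neg

lemma theta2_diff {τ : ℂ} (hτ : 0 < τ.im) : Differentiable ℂ (fun v => theta2 v τ) := by
  simp_rw [theta2_eq]
  exact thF_diff (1/2) hτ

lemma theta4_diff {τ : ℂ} (hτ : 0 < τ.im) : Differentiable ℂ (fun v => theta4 v τ) := by
  simp_rw [theta4_eq]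
  exact ((thF_diff 0 hτ).comp (differentiable_id.add_const _))

lemma deriv_theta1_zero {τ : ℂ} (hτ : 0 < τ.im) :
    Complex.exp (-(Real.pi * Complex.I * τ / 4)) * deriv (fun v => theta1 v τ) 0 =
      - (Complex.I * jacobiTheta₂' (1/2 + 1/2 * τ) τ) := by
  have h0 := theta1_zero hτ
  rw [theta1_eq, thF_eq, neg_eq_zero, mul_eq_zero] at h0
  have hJ := h0.resolve_left (Complex.exp_ne_zero _)
  have hd : HasDerivAt (fun v => theta1 v τ) _ 0 :=
    ((thF_hasDerivAt (1/2) (0 + 1/2) hτ).comp_add_const 0 (1/2)).neg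
  rw [hd.deriv, hJ, show (Real.pi : ℂ) * Complex.I * τ * (1/2)^2
    + 2 * (Real.pi : ℂ) * Complex.I * (0 + 1/2) * (1/2) =
      Real.pi * Complex.I * τ / 4 + Real.pi / 2 * Complex.I by ring, Complex.exp_add,
    Complex.exp_pi_div_two_mul_I, Complex.exp_neg, zero_add]
  field_simp
  ring

lemma lim_deriv {τ : ℂ} (hτ : 0 < τ.im) :
    Tendsto (fun m : ℕ => Complex.exp (-(Real.pi * Complex.I * (2 ^ m * τ) / 4)) *
      deriv (fun v => theta1 v (2 ^ m * τ)) 0) atTop (𝓝 (2 * Real.pi)) := by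
  have key (σ : ℂ) (n : ℤ) :
      (-Complex.I * (2 * Real.pi * Complex.I * n * Complex.exp (Real.pi * Complex.I * n))) *
        Complex.exp ((Real.pi : ℂ) * Complex.I * σ * (e1 n : ℂ)) =
      -Complex.I * jacobiTheta₂'_term n (1/2 + 1/2 * σ) σ := by
    rw [e1_cast, jacobiTheta₂'_term, jacobiTheta₂_term,
      show 2 * Real.pi * Complex.I * n * (1/2 + 1/2 * σ) + Real.pi * Complex.I * n ^ 2 * σ =
       Real.pi * Complex.I * n + (Real.pi : ℂ) * Complex.I * σ * ((n : ℂ) ^ 2 + n) by ring,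
      Complex.exp_add]
    ring
  have h := lim_series (fun n : ℤ =>
    (-Complex.I * (2 * Real.pi * Complex.I * n * Complex.exp (Real.pi * Complex.I * n)))) e1 hτ (by
    simp_rw [key]; exact ((summable_jacobiTheta₂'_term_iff _ _).mpr hτ).mul_left _)
  rw [sum_e1] at h
  have hv : (-Complex.I * (2 * Real.pi * Complex.I * ((0 : ℤ) : ℂ)
        * Complex.exp (Real.pi * Complex.I * ((0 : ℤ) : ℂ)))) +
      (-Complex.I * (2 * Real.pi * Complex.I * ((-1 : ℤ) : ℂ)
        * Complex.exp (Real.pi * Complex.I * ((-1 : ℤ) : ℂ)))) = 2 * Real.pi := by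
    push_cast
    rw [show (Real.pi : ℂ) * Complex.I * -1 = -(Real.pi * Complex.I) by ring, Complex.exp_neg,
      Complex.exp_pi_mul_I]
    ring_nf
    simp
  rw [hv] at h
  refine h.congr fun m => ?_
  rw [deriv_theta1_zero (im_pow hτ m), ← neg_mul, jacobiTheta₂', ← tsum_mul_left]
  exact tsum_congr (key _)

/-! Landen relations -/

lemma L34 (u : ℂ) {τ : ℂ} (hτ : 0 < τ.im) :
    theta3 u τ * theta4 u τ = theta4 (2 * u) (2 * τ) * theta4 0 (2 * τ) := by
  have hτ2 : 0 < (2 * τ).im := by simpa using hτ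
  rw [P34 _ _ hτ, sub_self, theta1_zero hτ2, two_mul u]; ring

lemma L22 {τ : ℂ} (hτ : 0 < τ.im) :
    theta2 0 τ ^ 2 = 2 * theta2 0 (2 * τ) * theta3 0 (2 * τ) := by
  rw [pow_two, P22 _ _ hτ]; simp only [add_zero, sub_zero]; ring

lemma L12 (u : ℂ) {τ : ℂ} (hτ : 0 < τ.im) :
    theta1 u τ * theta2 0 τ = 2 * theta1 u (2 * τ) * theta4 u (2 * τ) := by
  rw [P12 _ _ hτ]; simp only [add_zero, sub_zero]; ring

lemma L12' (u : ℂ) {τ : ℂ} (hτ : 0 < τ.im) :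
    theta1 u τ * theta2 u τ = theta1 (2 * u) (2 * τ) * theta4 0 (2 * τ) := by
  have hτ2 : 0 < (2 * τ).im := by simpa using hτ
  rw [P12 _ _ hτ, sub_self, theta1_zero hτ2, two_mul u]; ring

lemma Lderiv {τ : ℂ} (hτ : 0 < τ.im) :
    deriv (fun v => theta1 v τ) 0 * theta2 0 τ =
      2 * deriv (fun v => theta1 v (2 * τ)) 0 * theta4 0 (2 * τ) := by
  have hτ2 : 0 < (2 * τ).im := by simpa using hτ
  have h1 := ((theta1_diff hτ) 0).hasDerivAt.mul ((theta2_diff hτ) 0).hasDerivAt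
  have h2' : HasDerivAt (fun v : ℂ => theta1 (2 * v) (2 * τ))
      (deriv (fun v => theta1 v (2 * τ)) 0 * 2) 0 := by
    have hd : HasDerivAt (fun v => theta1 v (2 * τ)) (deriv (fun v => theta1 v (2 * τ)) 0)
        (2 * 0) := by
      rw [mul_zero]; exact ((theta1_diff hτ2) 0).hasDerivAt
    have hl : HasDerivAt (fun v : ℂ => 2 * v) (2 * 1) 0 := (hasDerivAt_id (0:ℂ)).const_mul 2
    rw [mul_one] at hl
    exact hd.comp 0 hl
  have h2 := h2'.mul_const (theta4 0 (2 * τ))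
  have heq : (fun v => theta1 (2 * v) (2 * τ) * theta4 0 (2 * τ)) =
    (fun v => theta1 v τ) * (fun v => theta2 v τ) := by
    funext v; exact (L12' v hτ).symm
  rw [heq] at h2
  have := h1.unique h2
  rw [theta1_zero hτ, zero_mul, add_zero] at this
  rw [this]; ring

/-- nonvanishing statement and its descent -/
def Good (τ : ℂ) : Prop := theta2 0 τ ≠ 0 ∧ theta3 0 τ ≠ 0 ∧ theta4 0 τ ≠ 0

lemma good_descend {τ : ℂ} (hτ : 0 < τ.im) (h : Good (2 * τ)) : Good τ := by
  obtain ⟨h2, h3, h4⟩ := h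
  have a := L34 0 hτ
  rw [mul_zero] at a
  have b := L22 hτ
  have ha : theta3 0 τ * theta4 0 τ ≠ 0 := by rw [a]; exact mul_ne_zero h4 h4
  have hb : theta2 0 τ ^ 2 ≠ 0 := by rw [b]; exact mul_ne_zero (mul_ne_zero two_ne_zero h2) h3
  exact ⟨fun h => hb (by rw [h]; ring), left_ne_zero_of_mul ha, right_ne_zero_of_mul ha⟩

lemma good {τ : ℂ} (hτ : 0 < τ.im) : Good τ := by
  have h2 := (lim_theta2 hτ).eventually_ne two_ne_zero
  have h3 := (lim_theta3 hτ).eventually_ne one_ne_zero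
  have h4 := (lim_theta4 hτ).eventually_ne one_ne_zero
  obtain ⟨m, hm2, hm3, hm4⟩ := (h2.and (h3.and h4)).exists
  have hm : Good (2 ^ m * τ) := ⟨right_ne_zero_of_mul hm2, hm3, hm4⟩
  clear hm2 hm3 hm4
  induction m with
  | zero => simpa using hm
  | succ k ih =>
    refine ih (good_descend (im_pow hτ k) ?_)
    rwa [← mul_assoc, ← pow_succ']

/-- ratio of the two sides in Jacobi's derivative formula -/
noncomputable def ratio (τ : ℂ) : ℂ :=
  deriv (fun v => theta1 v τ) 0 / (theta2 0 τ * theta3 0 τ * theta4 0 τ)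

lemma ratio_double {τ : ℂ} (hτ : 0 < τ.im) : ratio (2 * τ) = ratio τ := by
  have hτ2 : 0 < (2 * τ).im := by simpa using hτ
  obtain ⟨h2, h3, h4⟩ := good hτ
  obtain ⟨g2, g3, g4⟩ := good hτ2
  have a := L34 0 hτ
  rw [mul_zero] at a
  have b := L22 hτ
  have c := Lderiv hτ
  unfold ratio
  rw [div_eq_div_iff (by positivity) (by positivity)]
  have : 2 * theta4 0 (2*τ) ≠ 0 := mul_ne_zero two_ne_zero g4
  apply mul_left_cancel₀ this
  generalize deriv (fun v => theta1 v τ) 0 = d at *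
  generalize deriv (fun v => theta1 v (2 * τ)) 0 = d2 at *
  linear_combination (-theta2 0 τ * theta3 0 τ * theta4 0 τ) * c
    + d * theta2 0 τ ^ 2 * a + d * theta4 0 (2*τ) ^ 2 * b

lemma jacobi_deriv {τ : ℂ} (hτ : 0 < τ.im) :
    deriv (fun v => theta1 v τ) 0 = Real.pi * theta2 0 τ * theta3 0 τ * theta4 0 τ := by
  have hr (m : ℕ) : ratio (2 ^ m * τ) = ratio τ := by
    induction m with
    | zero => simp
    | succ k ih => rw [pow_succ', mul_assoc, ratio_double (im_pow hτ k), ih]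
  have hl := (lim_deriv hτ).div (((lim_theta2 hτ).mul (lim_theta3 hτ)).mul (lim_theta4 hτ))
    (by norm_num)
  have hc : Tendsto (fun _ : ℕ => ratio τ) atTop (𝓝 (2 * Real.pi / (2 * 1 * 1))) := by
    refine hl.congr fun m => ?_
    rw [← hr m, ratio]
    simp only [Pi.div_apply, mul_assoc]
    rw [mul_div_mul_left _ _ (Complex.exp_ne_zero _)]
  have he := tendsto_nhds_unique tendsto_const_nhds hc
  obtain ⟨h2, h3, h4⟩ := good hτ
  rw [ratio, div_eq_iff (mul_ne_zero (mul_ne_zero h2 h3) h4)] at he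
  rw [he]; ring

/-- second derivative at 0 of f(u+v) f(u-v) -/
lemma second_deriv_prod {f : ℂ → ℂ} (hf : Differentiable ℂ f) (u : ℂ) :
    deriv (deriv (fun v => f (u + v) * f (u - v))) 0 =
      2 * (deriv (deriv f) u * f u - deriv f u ^ 2) := by
  have hf' : Differentiable ℂ (deriv f) := by
    have := (hf.contDiff (n := 2))
    exact (this.differentiable_deriv_two)
  have hp {g : ℂ → ℂ} (hg : Differentiable ℂ g) (v : ℂ) :
      HasDerivAt (fun v => g (u + v)) (deriv g (u + v)) v :=
    (hg (u + v)).hasDerivAt.comp_const_add u v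
  have hm {g : ℂ → ℂ} (hg : Differentiable ℂ g) (v : ℂ) :
      HasDerivAt (fun v => g (u - v)) (-deriv g (u - v)) v :=
    (hg (u - v)).hasDerivAt.comp_const_sub u v
  have h1 : deriv (fun v => f (u + v) * f (u - v)) =
      fun v => deriv f (u + v) * f (u - v) + f (u + v) * (-deriv f (u - v)) := by
    funext v; exact ((hp hf v).mul (hm hf v)).deriv
  rw [h1]
  have h2 := ((hp hf' 0).mul (hm hf 0)).add ((hp hf 0).mul (hm hf' 0).neg)
  refine (HasDerivAt.deriv h2).trans ?_
  simp only [add_zero, sub_zero, Pi.neg_apply]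
  ring

/-- second derivative at 0 of A g² - B h² when g'(0)=0, h(0)=0 -/
lemma second_deriv_sq {g h : ℂ → ℂ} (hg : Differentiable ℂ g) (hh : Differentiable ℂ h)
    (A B : ℂ) :
    deriv (deriv (fun v => A * g v ^ 2 - B * h v ^ 2)) 0 =
      A * (2 * deriv g 0 ^ 2 + 2 * g 0 * deriv (deriv g) 0)
       - B * (2 * deriv h 0 ^ 2 + 2 * h 0 * deriv (deriv h) 0) := by
  have hg' : Differentiable ℂ (deriv g) := (hg.contDiff (n := 2)).differentiable_deriv_two
  have hh' : Differentiable ℂ (deriv h) := (hh.contDiff (n := 2)).differentiable_deriv_two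
  have h1 : deriv (fun v => A * g v ^ 2 - B * h v ^ 2) =
      fun v => A * (2 * g v * deriv g v) - B * (2 * h v * deriv h v) := by
    funext v
    refine (HasDerivAt.deriv (((((hg v).hasDerivAt.pow 2)).const_mul A).sub
      ((((hh v).hasDerivAt.pow 2)).const_mul B))).trans ?_
    simp
  rw [h1]
  have h2 := ((((hg 0).hasDerivAt.const_mul 2).mul (hg' 0).hasDerivAt).const_mul A).sub
    ((((hh 0).hasDerivAt.const_mul 2).mul (hh' 0).hasDerivAt).const_mul B)
  refine (HasDerivAt.deriv h2).trans ?_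
  ring

lemma deriv_zeta {f : ℂ → ℂ} (hf : Differentiable ℂ f) {u : ℂ} (hu : f u ≠ 0) :
    HasDerivAt (fun v => deriv f v / f v)
      ((deriv (deriv f) u * f u - deriv f u ^ 2) / f u ^ 2) u := by
  have hf' : Differentiable ℂ (deriv f) := (hf.contDiff (n := 2)).differentiable_deriv_two
  refine ((hf' u).hasDerivAt.div (hf u).hasDerivAt hu).congr_deriv ?_
  ring

lemma Spp_formula {τ u : ℂ} (hτ : 0 < τ.im) (h1 : theta1 u τ ≠ 0) (h4 : theta4 u τ ≠ 0) :
    Spp u τ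
        = -(Real.pi : ℂ) ^ 2 * theta2 0 τ ^ 2 * theta3 0 τ ^ 2 * theta4 0 τ ^ 3
            * theta4 (2 * u) τ / (theta1 u τ ^ 2 * theta4 u τ ^ 2) := by
  obtain ⟨g2, g3, g4⟩ := good hτ
  have d1 := theta1_diff hτ
  have d4 := theta4_diff hτ
  have hS : Spp u τ = _ := ((deriv_zeta d1 h1).sub (deriv_zeta d4 h4)).deriv
  have J := jacobi_deriv hτ
  have z := theta1_zero hτ
  have E1 : deriv (deriv (fun v => theta1 (u + v) τ * theta1 (u - v) τ * theta4 0 τ ^ 2)) 0 =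
      deriv (deriv (fun v => theta1 u τ ^ 2 * theta4 v τ ^ 2 - theta4 u τ ^ 2 * theta1 v τ ^ 2)) 0
      := by
    congr 2; funext v; exact Q11 u v hτ
  have E4 : deriv (deriv (fun v => theta4 (u + v) τ * theta4 (u - v) τ * theta4 0 τ ^ 2)) 0 =
      deriv (deriv (fun v => theta4 u τ ^ 2 * theta4 v τ ^ 2 - theta1 u τ ^ 2 * theta1 v τ ^ 2)) 0
      := by
    congr 2; funext v; exact Q44 u v hτ
  rw [second_deriv_sq d4 d1] at E1 E4
  have hc (f : ℂ → ℂ) (c : ℂ) : deriv (deriv (fun v => f v * c)) 0 = deriv (deriv f) 0 * c := by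
    have : deriv (fun v => f v * c) = fun v => deriv f v * c := by
      funext v; exact deriv_mul_const_field c
    rw [this]; exact deriv_mul_const_field c
  rw [hc, second_deriv_prod d1 u] at E1
  rw [hc, second_deriv_prod d4 u] at E4
  have D := Q44 u u hτ
  rw [sub_self, ← two_mul] at D
  rw [hS]
  rw [z] at E1 E4
  rw [J] at E1 E4
  generalize deriv (deriv (fun v => theta1 v τ)) u = a2 at *
  generalize deriv (deriv (fun v => theta4 v τ)) u = b2 at *
  generalize deriv (fun v => theta1 v τ) u = a1 at *
  generalize deriv (fun v => theta4 v τ) u = b1 at *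
  generalize deriv (deriv (fun v => theta4 v τ)) 0 = c2 at *
  generalize deriv (deriv (fun v => theta1 v τ)) 0 = e2 at *
  generalize deriv (fun v => theta4 v τ) 0 = c1 at *
  generalize theta1 u τ = A at *
  generalize theta4 u τ = B at *
  generalize theta4 0 τ = q at *
  generalize theta4 (2 * u) τ = w at *
  generalize theta3 0 τ = q3 at *
  generalize theta2 0 τ = q2 at *
  rw [div_sub_div _ _ (pow_ne_zero 2 h1) (pow_ne_zero 2 h4)]
  congr 1
  have hq : 2 * q ^ 2 ≠ 0 := mul_ne_zero two_ne_zero (pow_ne_zero 2 g4)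
  apply mul_left_cancel₀ hq
  linear_combination B ^ 2 * E1 - A ^ 2 * E4 - 2 * Real.pi ^ 2 * q2 ^ 2 * q3 ^ 2 * q ^ 2 * D * (-1)

/-- Theta representation and Landen-type identity for S'' (formula (n3)). -/
theorem Spp_theta_representation (τ u : ℂ) (hτ : 0 < τ.im)
    (h1 : theta1 u τ * theta4 u τ ≠ 0)
    (h2 : theta1 u (τ / 2) ≠ 0) :
    Spp u τ
        = -(Real.pi : ℂ) ^ 2 * theta2 0 τ ^ 2 * theta3 0 τ ^ 2 * theta4 0 τ ^ 3
            * theta4 (2 * u) τ / (theta1 u τ ^ 2 * theta4 u τ ^ 2)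
    ∧ Spp u τ
        = -(Real.pi : ℂ) ^ 2 * theta3 0 (τ / 2) * theta4 0 (τ / 2) * theta2 0 (τ / 2) ^ 2
            * (theta3 u (τ / 2) * theta4 u (τ / 2)) / theta1 u (τ / 2) ^ 2 := by
  have h1a := left_ne_zero_of_mul h1
  have h4a := right_ne_zero_of_mul h1
  have F := Spp_formula hτ h1a h4a
  refine ⟨F, ?_⟩
  have hσ : 0 < (τ / 2).im := by
    rw [show τ / 2 = τ / ((2 : ℝ) : ℂ) by norm_num, Complex.div_ofReal_im]; positivity
  have ht : 2 * (τ / 2) = τ := by ring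
  have a := L34 u hσ
  have a0 := L34 0 hσ
  have b := L22 hσ
  have c := L12 u hσ
  rw [ht] at a a0 b c
  rw [mul_zero] at a0
  obtain ⟨g2, -, -⟩ := good hσ
  rw [F, a, div_eq_div_iff (mul_ne_zero (pow_ne_zero 2 h1a) (pow_ne_zero 2 h4a))
    (pow_ne_zero 2 h2)]
  have hk : theta2 0 (τ / 2) ^ 2 ≠ 0 := pow_ne_zero 2 g2
  apply mul_left_cancel₀ hk
  have c2 : theta1 u (τ / 2) ^ 2 * theta2 0 (τ / 2) ^ 2 =
      4 * theta1 u τ ^ 2 * theta4 u τ ^ 2 := by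
    linear_combination (theta1 u (τ / 2) * theta2 0 (τ / 2)
      + 2 * theta1 u τ * theta4 u τ) * c
  have b2 : theta2 0 (τ / 2) ^ 4 = 4 * theta2 0 τ ^ 2 * theta3 0 τ ^ 2 := by
    linear_combination (theta2 0 (τ / 2) ^ 2 + 2 * theta2 0 τ * theta3 0 τ) * b
  linear_combination (-(Real.pi : ℂ) ^ 2 * theta2 0 τ ^ 2 * theta3 0 τ ^ 2 * theta4 0 τ ^ 3
            * theta4 (2 * u) τ) * c2
    + (Real.pi : ℂ) ^ 2 * theta4 0 τ * theta4 (2 * u) τ * theta1 u τ ^ 2 * theta4 u τ ^ 2 *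
      (theta2 0 (τ / 2) ^ 4 * a0 + theta4 0 τ ^ 2 * b2)
end

section
/- Product identity for S' and S'' (formula (n6)): Let τ lie in the complex upper half-plane and let u ∈ ℂ be such that θ₁(u,τ)·θ₄(u,τ) ≠ 0 and θ₁(u, τ/2) ≠ 0. Then S'(u,τ)·S''(u,τ) = (1/2)·℘₁'(u, τ/2), where ℘₁'(u,σ) = ∂_u ℘₁(u,σ). -/
open Complex

theorem aux_theta2_eq (u τ : ℂ) : theta2 u τ =
    Complex.exp (Real.pi * I * τ / 4 + Real.pi * I * u) * jacobiTheta₂ (u + τ / 2) τ := by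
  unfold theta2 jacobiTheta₂ jacobiTheta₂_term
  rw [← tsum_mul_left]
  congr 1; ext k
  rw [← Complex.exp_add]
  congr 1; ring

theorem aux_theta3_eq (u τ : ℂ) : theta3 u τ = jacobiTheta₂ u τ := by
  unfold theta3 jacobiTheta₂ jacobiTheta₂_term
  congr 1; ext k
  congr 1; ring

theorem aux_theta1_eq (u τ : ℂ) : theta1 u τ = -theta2 (u + 1/2) τ := rfl

theorem aux_theta4_eq (u τ : ℂ) : theta4 u τ = theta3 (u + 1/2) τ := rfl

theorem aux_summable2 (u : ℂ) {τ : ℂ} (hτ : 0 < τ.im) :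
    Summable (fun k : ℤ => Complex.exp ((Real.pi : ℂ) * Complex.I * τ * ((k : ℂ) + 1/2)^2
      + 2 * (Real.pi : ℂ) * Complex.I * u * ((k : ℂ) + 1/2))) := by
  have h := ((summable_jacobiTheta₂_term_iff (u + τ / 2) τ).2 hτ).mul_left
    (Complex.exp (Real.pi * I * τ / 4 + Real.pi * I * u))
  refine h.congr fun k => ?_
  unfold jacobiTheta₂_term
  rw [← Complex.exp_add]
  congr 1; ring

theorem aux_summable3 (u : ℂ) {τ : ℂ} (hτ : 0 < τ.im) :
    Summable (fun k : ℤ => Complex.exp ((Real.pi : ℂ) * Complex.I * τ * (k : ℂ)^2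
      + 2 * (Real.pi : ℂ) * Complex.I * u * (k : ℂ))) := by
  have h := (summable_jacobiTheta₂_term_iff u τ).2 hτ
  refine h.congr fun k => ?_
  unfold jacobiTheta₂_term
  congr 1; ring

theorem aux_diff2 {τ : ℂ} (hτ : 0 < τ.im) : Differentiable ℂ (fun u => theta2 u τ) := by
  simp_rw [aux_theta2_eq]
  intro u
  have h := differentiableAt_jacobiTheta₂_fst (u + τ / 2) hτ
  refine DifferentiableAt.mul (by fun_prop) ?_
  exact DifferentiableAt.comp (g := fun z => jacobiTheta₂ z τ) u h (by fun_prop)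

theorem aux_diff3 {τ : ℂ} (hτ : 0 < τ.im) : Differentiable ℂ (fun u => theta3 u τ) := by
  simp_rw [aux_theta3_eq]
  exact fun u => differentiableAt_jacobiTheta₂_fst u hτ

theorem aux_exp_int (k : ℤ) : Complex.exp (2 * Real.pi * I * k) = 1 := by
  rw [Complex.exp_eq_one_iff]; exact ⟨k, by ring⟩

theorem aux_theta2_add_one (u τ : ℂ) : theta2 (u + 1) τ = -theta2 u τ := by
  unfold theta2
  rw [← tsum_neg]
  congr 1; ext k
  have : (Real.pi : ℂ) * Complex.I * τ * ((k : ℂ) + 1/2)^2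
      + 2 * (Real.pi : ℂ) * Complex.I * (u + 1) * ((k : ℂ) + 1/2) =
      ((Real.pi : ℂ) * Complex.I * τ * ((k : ℂ) + 1/2)^2
      + 2 * (Real.pi : ℂ) * Complex.I * u * ((k : ℂ) + 1/2)) + 2 * Real.pi * I * k
      + Real.pi * I := by ring
  rw [this, Complex.exp_add, Complex.exp_add, aux_exp_int, Complex.exp_pi_mul_I]
  ring

theorem aux_theta2_neg (u τ : ℂ) : theta2 (-u) τ = theta2 u τ := by
  unfold theta2
  rw [← (Equiv.subLeft (-1 : ℤ)).tsum_eq]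
  congr 1; ext k
  congr 1
  simp only [Equiv.subLeft_apply]
  push_cast
  ring

/-- Reindexing of a double series along the even sublattice. -/
theorem aux_reindex (A B C D E H : ℤ → ℂ) (hA : Summable A) (hB : Summable B)
    (hC : Summable C) (hD : Summable D) (hE : Summable E) (hH : Summable H)
    (heven : ∀ m n : ℤ, A (m + n) * B (m - n) - C (m + n) * D (m - n) = 2 * (E m * H n))
    (hodd : ∀ k l m : ℤ, k + l = 2 * m + 1 → A k * B l - C k * D l = 0) :
    (∑' k, A k) * (∑' k, B k) - (∑' k, C k) * (∑' k, D k)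
      = 2 * ((∑' k, E k) * (∑' k, H k)) := by
  have s1 : Summable (fun z : ℤ × ℤ => A z.1 * B z.2) :=
    summable_mul_of_summable_norm (f := A) (g := B) hA.norm hB.norm
  have s2 : Summable (fun z : ℤ × ℤ => C z.1 * D z.2) :=
    summable_mul_of_summable_norm (f := C) (g := D) hC.norm hD.norm
  rw [tsum_mul_tsum_of_summable_norm hA.norm hB.norm,
    tsum_mul_tsum_of_summable_norm hC.norm hD.norm,
    tsum_mul_tsum_of_summable_norm hE.norm hH.norm,
    ← Summable.tsum_sub s1 s2, ← tsum_mul_left]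
  have hg : Function.Injective (fun p : ℤ × ℤ => (p.1 + p.2, p.1 - p.2)) := by
    rintro ⟨x, y⟩ ⟨z, w⟩ h
    simp only [Prod.mk.injEq] at h ⊢
    omega
  have h := hg.tsum_eq (f := fun z : ℤ × ℤ => A z.1 * B z.2 - C z.1 * D z.2) (by
    rintro ⟨k, l⟩ hkl
    rcases Int.even_or_odd' (k + l) with ⟨m, hm | hm⟩
    · exact ⟨(m, k - m), by simp only [Prod.mk.injEq]; omega⟩
    · exact absurd (hodd k l m hm) hkl)
  rw [← h]
  exact tsum_congr fun p => heven p.1 p.2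

/-- The basic duplication identity. -/
theorem aux_dup (a b τ : ℂ) (hτ : 0 < τ.im) :
    theta2 a (τ / 2) * theta2 b (τ / 2) - theta2 (a + 1/2) (τ / 2) * theta2 (b + 1/2) (τ / 2)
      = 2 * (theta2 (a + b) τ * theta3 (a - b) τ) := by
  have hσ : 0 < (τ / 2).im := by
    have : (τ / 2).im = τ.im / 2 := by simp
    rw [this]; linarith
  have key : ∀ k l : ℤ, Complex.exp ((Real.pi : ℂ) * Complex.I * (τ / 2) * ((k : ℂ) + 1/2)^2
      + 2 * (Real.pi : ℂ) * Complex.I * (a + 1/2) * ((k : ℂ) + 1/2)) *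
      Complex.exp ((Real.pi : ℂ) * Complex.I * (τ / 2) * ((l : ℂ) + 1/2)^2
      + 2 * (Real.pi : ℂ) * Complex.I * (b + 1/2) * ((l : ℂ) + 1/2)) =
      - Complex.exp (Real.pi * I * (k + l : ℤ)) *
      (Complex.exp ((Real.pi : ℂ) * Complex.I * (τ / 2) * ((k : ℂ) + 1/2)^2
      + 2 * (Real.pi : ℂ) * Complex.I * a * ((k : ℂ) + 1/2)) *
      Complex.exp ((Real.pi : ℂ) * Complex.I * (τ / 2) * ((l : ℂ) + 1/2)^2
      + 2 * (Real.pi : ℂ) * Complex.I * b * ((l : ℂ) + 1/2))) := by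
    intro k l
    have : - Complex.exp (Real.pi * I * (k + l : ℤ)) =
        Complex.exp (Real.pi * I * (k + l : ℤ) + Real.pi * I) := by
      rw [Complex.exp_add, Complex.exp_pi_mul_I]; ring
    rw [this, ← Complex.exp_add, ← Complex.exp_add, ← Complex.exp_add]
    congr 1
    push_cast
    ring
  refine aux_reindex _ _ _ _ _ _ (aux_summable2 a hσ) (aux_summable2 b hσ)
    (aux_summable2 (a + 1/2) hσ) (aux_summable2 (b + 1/2) hσ)
    (aux_summable2 (a + b) hτ) (aux_summable3 (a - b) hτ) ?_ ?_
  · intro m n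
    rw [key]
    have h1 : Complex.exp (Real.pi * I * ((m + n + (m - n) : ℤ) : ℂ)) = 1 := by
      rw [← aux_exp_int m]; congr 1; push_cast; ring
    rw [h1, ← Complex.exp_add, ← Complex.exp_add]
    rw [neg_one_mul, sub_neg_eq_add, ← two_mul]
    congr 2
    push_cast
    ring
  · intro k l m hm
    rw [key]
    have h1 : Complex.exp (Real.pi * I * ((k + l : ℤ) : ℂ)) = -1 := by
      rw [hm]
      have : (Real.pi * I * ((2 * m + 1 : ℤ) : ℂ) : ℂ) = 2 * Real.pi * I * m + Real.pi * I := by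
        push_cast; ring
      rw [this, Complex.exp_add, aux_exp_int, Complex.exp_pi_mul_I]; ring
    rw [h1]
    ring

/-- Abstract calculus core. -/
theorem aux_core (f g F G X Y : ℂ → ℂ) (hf : Differentiable ℂ f) (hg : Differentiable ℂ g)
    (hF : Differentiable ℂ F) (hG : Differentiable ℂ G)
    (hX : Differentiable ℂ X) (hY : Differentiable ℂ Y)
    (hF0 : F 0 = 0) (hGe : ∀ x, G (-x) = G x)
    (hI : ∀ x y, f (x + y) * g (x - y) = 1 / 2 * (F x * G y + G x * F y))
    (hII : ∀ x y, F (x + y) * F (x - y) = X x * Y y - Y x * X y)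
    (hIII : ∀ x, G x ^ 2 = X x * Y 0 + Y x * X 0)
    (hG0 : G 0 ≠ 0) :
    ∃ e : ℂ, ∀ v, F v ≠ 0 →
      (deriv f v / f v - deriv g v / g v) ^ 2
        = - deriv (fun w => deriv F w / F w) v + e := by
  have hdF : Differentiable ℂ (deriv F) := hF.deriv
  have hdX : Differentiable ℂ (deriv X) := hX.deriv
  have hdY : Differentiable ℂ (deriv Y) := hY.deriv
  -- derivative of G at zero
  have hG1 : deriv G 0 = 0 := by
    have h := deriv_comp_neg G (0 : ℂ)
    have h2 : (fun x => G (-x)) = G := funext hGe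
    rw [h2, neg_zero] at h
    have h3 : (2 : ℂ) * deriv G 0 = 0 := by linear_combination h
    simpa using h3
  have hp : ∀ x y : ℂ, HasDerivAt (fun y => x + y) 1 y := fun x y => by
    simpa using (hasDerivAt_id y).const_add x
  have hm : ∀ x y : ℂ, HasDerivAt (fun y => x - y) (-1) y := fun x y => by
    simpa using (hasDerivAt_id y).const_sub x
  have cp : ∀ (h : ℂ → ℂ), Differentiable ℂ h → ∀ x y : ℂ,
      HasDerivAt (fun y => h (x + y)) (deriv h (x + y)) y := fun h hh x y => by
    have := HasDerivAt.comp (h₂ := h) y (hh (x + y)).hasDerivAt (hp x y)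
    rw [mul_one] at this
    exact this
  have cm : ∀ (h : ℂ → ℂ), Differentiable ℂ h → ∀ x y : ℂ,
      HasDerivAt (fun y => h (x - y)) (-deriv h (x - y)) y := fun h hh x y => by
    have := HasDerivAt.comp (h₂ := h) y (hh (x - y)).hasDerivAt (hm x y)
    rw [mul_neg_one] at this
    exact this
  have hW : ∀ x, deriv f x * g x - f x * deriv g x = 1 / 2 * (G x * deriv F 0) := by
    intro x
    have h1 := (cp f hf x 0).mul (cm g hg x 0)
    have h2 := (((hG 0).hasDerivAt.const_mul (F x)).add
      ((hF 0).hasDerivAt.const_mul (G x))).const_mul (1 / 2 : ℂ)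
    have h3 := h1.unique (h2.congr_of_eventuallyEq
      (Filter.Eventually.of_forall fun y => by simpa using hI x y))
    simp only [add_zero, sub_zero, hG1] at h3
    linear_combination h3
  have hfg : ∀ x, f x * g x = 1 / 2 * (F x * G 0) := by
    intro x
    have := hI x 0
    simp only [add_zero, sub_zero, hF0] at this
    linear_combination this
  have hFF : ∀ x, F x ^ 2 = X x * Y 0 - Y x * X 0 := by
    intro x
    have := hII x 0
    simp only [add_zero, sub_zero] at this
    linear_combination this
  have hD1 : ∀ x y, deriv F (x + y) * F (x - y) - F (x + y) * deriv F (x - y)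
      = X x * deriv Y y - Y x * deriv X y := by
    intro x y
    have h1 := (cp F hF x y).mul (cm F hF x y)
    have h2 := ((hY y).hasDerivAt.const_mul (X x)).sub ((hX y).hasDerivAt.const_mul (Y x))
    have h3 := h1.unique (h2.congr_of_eventuallyEq
      (Filter.Eventually.of_forall fun y => by simpa using hII x y))
    linear_combination h3
  have hD2 : ∀ x, 2 * (deriv (deriv F) x * F x - deriv F x ^ 2)
      = X x * deriv (deriv Y) 0 - Y x * deriv (deriv X) 0 := by
    intro x
    have h1 := ((cp _ hdF x 0).mul (cm F hF x 0)).sub ((cp F hF x 0).mul (cm _ hdF x 0))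
    have h2 := ((hdY 0).hasDerivAt.const_mul (X x)).sub ((hdX 0).hasDerivAt.const_mul (Y x))
    have h3 := h1.unique (h2.congr_of_eventuallyEq
      (Filter.Eventually.of_forall fun y => by simpa using hD1 x y))
    simp only [add_zero, sub_zero] at h3
    linear_combination h3
  have hG00 := hIII 0
  have hX0 : X 0 ≠ 0 := by
    intro h; rw [h] at hG00; apply hG0; simpa using hG00
  have hY0 : Y 0 ≠ 0 := by
    intro h; rw [h] at hG00; apply hG0; simpa using hG00
  have hF1 := hD2 0
  rw [hF0] at hF1
  refine ⟨(Y 0 * deriv (deriv X) 0 + X 0 * deriv (deriv Y) 0) / (4 * X 0 * Y 0),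
    fun v hv => ?_⟩
  have hne : f v * g v ≠ 0 := by
    rw [hfg]; simp [hv, hG0]
  have hfv := left_ne_zero_of_mul hne
  have hgv := right_ne_zero_of_mul hne
  have e1 : deriv f v / f v - deriv g v / g v = deriv F 0 / G 0 * (G v / F v) := by
    have h1 := hW v
    have h2 := hfg v
    rw [div_sub_div _ _ hfv hgv, h1, h2]
    field_simp
  have e2 : deriv (fun w => deriv F w / F w) v
      = (deriv (deriv F) v * F v - deriv F v * deriv F v) / F v ^ 2 :=
    ((hdF v).hasDerivAt.div (hF v).hasDerivAt hv).deriv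
  rw [e1, e2]
  have h2 := hD2 v
  have h3 := hIII v
  have h4 := hFF v
  have e3 : (deriv F 0 / G 0 * (G v / F v)) ^ 2 =
      (deriv F 0) ^ 2 * G v ^ 2 / (G 0 ^ 2 * F v ^ 2) := by
    field_simp
  have e4 : (deriv F 0) ^ 2 = (Y 0 * deriv (deriv X) 0 - X 0 * deriv (deriv Y) 0) / 2 := by
    linear_combination (-1 / 2 : ℂ) * hF1
  have e5 : deriv (deriv F) v * F v - deriv F v * deriv F v =
      (X v * deriv (deriv Y) 0 - Y v * deriv (deriv X) 0) / 2 := by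
    linear_combination (1 / 2 : ℂ) * h2
  have e6 : X v * Y 0 - Y v * X 0 ≠ 0 := by rw [← h4]; exact pow_ne_zero 2 hv
  have e6' : Y 0 * X v - X 0 * Y v ≠ 0 := by convert e6 using 1; ring
  have e7 : X 0 * Y 0 + Y 0 * X 0 = 2 * X 0 * Y 0 := by ring
  rw [e3, e4, e5, h3, hG00, h4, e7]
  field_simp
  ring

/-- Product identity for S' and S'' (formula (n6)): S'(u,τ)·S''(u,τ) = ℘₁'(u,τ/2)/2. -/
theorem Sp_mul_Spp (τ u : ℂ) (hτ : 0 < τ.im)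
    (h1 : theta1 u τ * theta4 u τ ≠ 0)
    (h2 : theta1 u (τ / 2) ≠ 0) :
    Sp u τ * Spp u τ = (1 / 2) * wp1' u (τ / 2) := by
  have hσ : 0 < (τ / 2).im := by
    have : (τ / 2).im = τ.im / 2 := by simp
    rw [this]; linarith
  have d1 : ∀ {t : ℂ}, 0 < t.im → Differentiable ℂ (fun v => theta1 v t) := by
    intro t ht
    simp_rw [aux_theta1_eq]
    exact ((aux_diff2 ht).comp (f := fun v : ℂ => v + 1/2) (by fun_prop)).neg
  have d4 : Differentiable ℂ (fun v => theta4 v τ) := by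
    simp_rw [aux_theta4_eq]
    exact (aux_diff3 hτ).comp (f := fun v : ℂ => v + 1/2) (by fun_prop)
  have dX : Differentiable ℂ (fun v => theta3 (2 * v) τ) :=
    (aux_diff3 hτ).comp (f := fun v : ℂ => 2 * v) (by fun_prop)
  have dY : Differentiable ℂ (fun v => theta2 (2 * v) τ) :=
    (aux_diff2 hτ).comp (f := fun v : ℂ => 2 * v) (by fun_prop)
  have sh : ∀ x t : ℂ, theta2 (x + 1/2 + 1/2) t = -theta2 x t := by
    intro x t
    rw [← aux_theta2_add_one]; congr 1; ring
  have odd1 : ∀ x t : ℂ, theta1 (-x) t = -theta1 x t := by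
    intro x t
    rw [aux_theta1_eq, aux_theta1_eq, ← aux_theta2_neg (-x + 1/2), neg_neg,
      ← sh (-(-x + 1/2))]
    congr 1; ring
  have z1 : ∀ t : ℂ, theta1 0 t = 0 := by
    intro t
    have h := odd1 0 t
    rw [neg_zero] at h
    have : (2 : ℂ) * theta1 0 t = 0 := by linear_combination h
    simpa using this
  have hI : ∀ x y, theta1 (x + y) τ * theta4 (x - y) τ = 1 / 2 *
      (theta1 x (τ/2) * theta2 y (τ/2) + theta2 x (τ/2) * theta1 y (τ/2)) := by
    intro x y
    have h := aux_dup (x + 1/2) y τ hτ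
    rw [sh] at h
    rw [show x + 1/2 + y = x + y + 1/2 by ring, show x + 1/2 - y = x - y + 1/2 by ring] at h
    simp only [aux_theta1_eq, aux_theta4_eq]
    linear_combination (1/2 : ℂ) * h
  have hA : ∀ x y, theta2 (x + y) (τ/2) * theta2 (x - y) (τ/2)
      - theta1 (x + y) (τ/2) * theta1 (x - y) (τ/2)
      = 2 * (theta2 (2 * x) τ * theta3 (2 * y) τ) := by
    intro x y
    have h := aux_dup (x + y) (x - y) τ hτ
    rw [show x + y + (x - y) = 2 * x by ring, show x + y - (x - y) = 2 * y by ring] at h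
    simp only [aux_theta1_eq]
    linear_combination h
  have hB : ∀ x y, theta2 (x + y) (τ/2) * theta2 (x - y) (τ/2)
      + theta1 (x + y) (τ/2) * theta1 (x - y) (τ/2)
      = 2 * (theta2 (2 * y) τ * theta3 (2 * x) τ) := by
    intro x y
    have h := hA y x
    rw [← neg_sub x y, odd1, aux_theta2_neg, add_comm y x] at h
    linear_combination h
  have hG0 : theta2 0 (τ/2) ≠ 0 := by
    intro h0
    have h := hI u 0
    rw [h0, z1] at h
    apply h1
    simpa using h
  obtain ⟨e, he⟩ := aux_core (fun v => theta1 v τ) (fun v => theta4 v τ)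
    (fun v => theta1 v (τ/2)) (fun v => theta2 v (τ/2))
    (fun v => theta3 (2 * v) τ) (fun v => theta2 (2 * v) τ)
    (d1 hτ) d4 (d1 hσ) (aux_diff2 hσ) dX dY (z1 _) (fun x => aux_theta2_neg x _) hI
    (fun x y => by
      show theta1 (x + y) (τ/2) * theta1 (x - y) (τ/2) = theta3 (2 * x) τ * theta2 (2 * y) τ
        - theta2 (2 * x) τ * theta3 (2 * y) τ
      linear_combination (1/2 : ℂ) * hB x y - (1/2 : ℂ) * hA x y)
    (fun x => by
      show theta2 x (τ/2) ^ 2 = theta3 (2 * x) τ * theta2 (2 * 0) τ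
        + theta2 (2 * x) τ * theta3 (2 * 0) τ
      have ha := hA x 0
      have hb := hB x 0
      simp only [add_zero, sub_zero] at ha hb
      linear_combination (1/2 : ℂ) * ha + (1/2 : ℂ) * hb)
    hG0
  have hev : ∀ᶠ v in nhds u, theta1 v (τ/2) ≠ 0 :=
    (d1 hσ).continuous.continuousAt.eventually_ne h2
  have heq : (fun v => wp1 v (τ/2)) =ᶠ[nhds u] fun v => Sp v τ ^ 2 - e := by
    filter_upwards [hev] with v hv
    have := he v hv
    simp only [wp1, Sp, zeta1, zeta4]
    linear_combination -this
  have hSd : DifferentiableAt ℂ (fun v => Sp v τ) u := by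
    simp only [Sp, zeta1, zeta4]
    exact (((d1 hτ).deriv u).div (d1 hτ u) (left_ne_zero_of_mul h1)).sub
      ((d4.deriv u).div (d4 u) (right_ne_zero_of_mul h1))
  have hd := ((hSd.hasDerivAt.pow 2).sub_const e).congr_of_eventuallyEq heq
  unfold wp1' Spp
  rw [hd.deriv]
  push_cast
  ring
end

section
/- The elliptic curve of the dispersionless DKP hierarchy (equation (D5)): Let Ω ⊆ ℂ, let p, w : Ω → ℂ with w(z) ≠ 0 for all z ∈ Ω, let A : {(z,ζ) ∈ Ω×Ω : z ≠ ζ} → ℂ with A(z,ζ) ≠ 0 everywhere, and let c ∈ ℂ. Suppose that for all z, ζ ∈ Ω with z ≠ ζ the two relations hold: A(z,ζ)·(1 − 1/(w(z)w(ζ))) = (p(z) − p(ζ))/(z − ζ) and c²·A(z,ζ)⁻¹·(w(z) − w(ζ))/(z − ζ) = p(z) + p(ζ). Then the function z ↦ p(z)² − c²·(w(z) + 1/w(z)) is constant on Ω; i.e., there exists V ∈ ℂ such that p(z)² = c²(w(z) + w(z)⁻¹) + V for all z ∈ Ω, so (p(z), w(z)) lies on a fixed elliptic curve. -/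
/-- The elliptic curve of the dispersionless DKP hierarchy (equation (D5)):
the two dDKP relations force `p(z)² − c²(w(z) + w(z)⁻¹)` to be constant on Ω,
so `(p(z), w(z))` lies on a fixed elliptic curve `p² = c²(w + w⁻¹) + V`. -/
theorem dDKP_elliptic_curve
    (Ω : Set ℂ) (p w : ℂ → ℂ) (A : ℂ → ℂ → ℂ) (c : ℂ)
    (hw : ∀ z ∈ Ω, w z ≠ 0)
    (hA : ∀ z ∈ Ω, ∀ ζ ∈ Ω, z ≠ ζ → A z ζ ≠ 0)
    (h1 : ∀ z ∈ Ω, ∀ ζ ∈ Ω, z ≠ ζ →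
      A z ζ * (1 - 1 / (w z * w ζ)) = (p z - p ζ) / (z - ζ))
    (h2 : ∀ z ∈ Ω, ∀ ζ ∈ Ω, z ≠ ζ →
      c ^ 2 * (A z ζ)⁻¹ * ((w z - w ζ) / (z - ζ)) = p z + p ζ) :
    ∃ V : ℂ, ∀ z ∈ Ω, p z ^ 2 = c ^ 2 * (w z + (w z)⁻¹) + V := by
  rcases Ω.eq_empty_or_nonempty with h | ⟨y, hy⟩
  · exact ⟨0, fun z hz => by simp [h] at hz⟩
  refine ⟨p y ^ 2 - c ^ 2 * (w y + (w y)⁻¹), fun z hz => ?_⟩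
  by_cases hzy : z = y
  · subst hzy; ring
  have hd : z - y ≠ 0 := sub_ne_zero.mpr hzy
  have hA' := hA z hz y hy hzy
  have hwz := hw z hz
  have hwy := hw y hy
  have e1 : p z - p y = A z y * (1 - 1 / (w z * w y)) * (z - y) := by
    rw [h1 z hz y hy hzy, div_mul_cancel₀ _ hd]
  have e2 := h2 z hz y hy hzy
  have e3 : p z ^ 2 - p y ^ 2 = c ^ 2 * (w z + (w z)⁻¹) - c ^ 2 * (w y + (w y)⁻¹) := by
    have : p z ^ 2 - p y ^ 2 = (p z - p y) * (p z + p y) := by ring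
    rw [this, e1, ← e2]
    field_simp
    ring
  linear_combination e3
end
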